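/- There are continuous functions f, F : 𝓜 → (0, ∞) (with respect to the H^s topology on the open set 𝓜 ⊂ H^s(𝕋,ℝⁿ)) such that for every γ ∈ 𝓜 and every u ∈ H^s(𝕋,ℝⁿ) one has f(γ)·‖u‖_{H^s} ≤ ‖u‖_{H^s(γ)} ≤ F(γ)·‖u‖_{H^s}. In particular, for each γ ∈ 𝓜 the γ-dependent norm ‖·‖_{H^s(γ)} is equivalent to ‖·‖_{H^s}. -/

import Mathlib

open MeasureTheory Real Filter Set
open scoped ENNReal Topology RealInnerProductSpace

noncomputable section

/-- Euclidean space `ℝⁿ`. -/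
abbrev En (n : ℕ) : Type := EuclideanSpace ℝ (Fin n)

/-- A fundamental domain for the circle `𝕋 = ℝ/ℤ`. -/
def I01 : Set ℝ := Set.Ico (0 : ℝ) 1

/-- The intrinsic distance on `𝕋 = ℝ/ℤ`, expressed for real representatives. -/
def dT (x y : ℝ) : ℝ := ⨅ k : ℤ, |x - y - (k : ℝ)|

/-- Supremum norm of a (periodic) function on the circle. -/
def supNorm {E : Type*} [NormedAddCommGroup E] (f : ℝ → E) : ℝ := ⨆ x : ℝ, ‖f x‖

/-- The squared Gagliardo seminorm `[v]_{H^σ}²` of a function on the circle, valued in `[0,∞]`. -/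
def gagliardoSqE {E : Type*} [NormedAddCommGroup E] (σ : ℝ) (v : ℝ → E) : ℝ≥0∞ :=
  ∫⁻ x in I01, ∫⁻ y in I01, ENNReal.ofReal (‖v y - v x‖ ^ 2 / dT x y ^ (2 * σ + 1))

/-- Membership in the Sobolev–Slobodeckij space `H^s(𝕋, ℝⁿ)`; for `s ∈ (3/2,2)` such
functions have a `C¹` representative, which we take as the defining data. -/
def InHs {n : ℕ} (s : ℝ) (u : ℝ → En n) : Prop :=
  Function.Periodic u 1 ∧ ContDiff ℝ 1 u ∧ gagliardoSqE (s - 1) (deriv u) < ⊤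

/-- The squared `H^s` norm `‖u‖²_{L²} + ‖u'‖²_{L²} + [u']²_{H^{s-1}}`. -/
def HsNormSq {n : ℕ} (s : ℝ) (u : ℝ → En n) : ℝ :=
  (∫ x in I01, ‖u x‖ ^ 2) + (∫ x in I01, ‖deriv u x‖ ^ 2) +
    (gagliardoSqE (s - 1) (deriv u)).toReal

/-- The `H^s` norm. -/
def HsNorm {n : ℕ} (s : ℝ) (u : ℝ → En n) : ℝ := Real.sqrt (HsNormSq s u)

/-- The `H^s` inner product. -/
def HsInner {n : ℕ} (s : ℝ) (u v : ℝ → En n) : ℝ :=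
  (∫ x in I01, ⟪u x, v x⟫) + (∫ x in I01, ⟪deriv u x, deriv v x⟫) +
    ∫ x in I01, ∫ y in I01,
      ⟪deriv u y - deriv u x, deriv v y - deriv v x⟫ / dT x y ^ (2 * (s - 1) + 1)

/-- The manifold `𝓜` of embedded closed curves of class `H^s`: injective (on the circle)
immersions. -/
def InM {n : ℕ} (s : ℝ) (γ : ℝ → En n) : Prop :=
  InHs s γ ∧ Set.InjOn γ I01 ∧ ∀ x, deriv γ x ≠ 0

/-- The length `L(γ)`. -/
def arcLen {n : ℕ} (γ : ℝ → En n) : ℝ := ∫ x in I01, ‖deriv γ x‖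

/-- The arc-length distance `d_γ(x,y)`: the length of the shorter of the two arcs of `γ`
between `x` and `y`. -/
def arcDist {n : ℕ} (γ : ℝ → En n) (x y : ℝ) : ℝ :=
  ⨅ k : ℤ, |∫ t in x..(y + (k : ℝ)), ‖deriv γ t‖|

/-- Derivative with respect to arc length, `D_γ u = u' / |γ'|`. -/
def Dg {n : ℕ} (γ u : ℝ → En n) (x : ℝ) : En n := ‖deriv γ x‖⁻¹ • deriv u x

/-- `𝒟_γ u (x)`, the pointwise linear map `w ↦ |γ'(x)|⁻² ⟪γ'(x), w⟫ u'(x)`. -/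
def DDg {n : ℕ} (γ u : ℝ → En n) (x : ℝ) (w : En n) : En n :=
  ((‖deriv γ x‖ ^ 2)⁻¹ * ⟪deriv γ x, w⟫) • deriv u x

/-- The operator `R^s_γ`. -/
def Rop {n : ℕ} (s : ℝ) (γ u : ℝ → En n) (x y : ℝ) : En n :=
  (‖γ y - γ x‖ ^ s)⁻¹ • (u y - u x - DDg γ u x (γ y - γ x))

/-- Density of the measure `μ_γ` with respect to `λ ⊗ λ` on `𝕋 × 𝕋`. -/
def muW {n : ℕ} (γ : ℝ → En n) (x y : ℝ) : ℝ :=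
  ‖deriv γ x‖ * ‖deriv γ y‖ / ‖γ y - γ x‖

/-- Density of the measure `ν_γ` with respect to `λ ⊗ λ` on `𝕋 × 𝕋`. -/
def nuW {n : ℕ} (γ : ℝ → En n) (x y : ℝ) : ℝ :=
  ‖deriv γ x‖ * ‖deriv γ y‖ / arcDist γ x y

/-- The tangent-point energy, valued in `[0,∞]`. -/
def EtpE {n : ℕ} (s : ℝ) (γ : ℝ → En n) : ℝ≥0∞ :=
  ∫⁻ x in I01, ∫⁻ y in I01, ENNReal.ofReal (‖Rop s γ γ x y‖ ^ 2 * muW γ x y)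

/-- The tangent-point energy, real-valued (finite on `𝓜`). -/
def Etp {n : ℕ} (s : ℝ) (γ : ℝ → En n) : ℝ := (EtpE s γ).toReal

/-- `‖R^s_γ u‖²_{L²(ν_γ)}`, valued in `[0,∞]`. -/
def RnuSqE {n : ℕ} (s : ℝ) (γ u : ℝ → En n) : ℝ≥0∞ :=
  ∫⁻ x in I01, ∫⁻ y in I01, ENNReal.ofReal (‖Rop s γ u x y‖ ^ 2 * nuW γ x y)

/-- `‖R^s_γ u‖²_{L²(ν_γ)}`, real-valued. -/
def RnuSq {n : ℕ} (s : ℝ) (γ u : ℝ → En n) : ℝ := (RnuSqE s γ u).toReal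

/-- The squared `γ`-dependent seminorm `[u]²_{H^s(γ)}`, valued in `[0,∞]`. -/
def gagGammaSqE {n : ℕ} (s : ℝ) (γ u : ℝ → En n) : ℝ≥0∞ :=
  ∫⁻ x in I01, ∫⁻ y in I01,
    ENNReal.ofReal (‖Dg γ u y - Dg γ u x‖ ^ 2 / arcDist γ x y ^ (2 * (s - 1)) * nuW γ x y)

/-- The squared `γ`-dependent seminorm `[u]²_{H^s(γ)}`, real-valued. -/
def gagGammaSq {n : ℕ} (s : ℝ) (γ u : ℝ → En n) : ℝ := (gagGammaSqE s γ u).toReal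

/-- The inner product `⟨u,v⟩_{L²(γ)}`. -/
def innerL2g {n : ℕ} (γ u v : ℝ → En n) : ℝ := ∫ x in I01, ⟪u x, v x⟫ * ‖deriv γ x‖

/-- The inner product `⟨u,v⟩_{H¹(γ)}`. -/
def innerH1g {n : ℕ} (γ u v : ℝ → En n) : ℝ :=
  ∫ x in I01, ⟪Dg γ u x, Dg γ v x⟫ * ‖deriv γ x‖

/-- The squared `γ`-dependent norm `‖u‖²_{H^s(γ)}`. -/
def HsGammaNormSq {n : ℕ} (s : ℝ) (γ u : ℝ → En n) : ℝ :=
  innerL2g γ u u + innerH1g γ u u + gagGammaSq s γ u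

/-- The `γ`-dependent norm `‖u‖_{H^s(γ)}`. -/
def HsGammaNorm {n : ℕ} (s : ℝ) (γ u : ℝ → En n) : ℝ := Real.sqrt (HsGammaNormSq s γ u)

/-- The bilinear form `B¹_γ`. -/
def B1 {n : ℕ} (s : ℝ) (γ u v : ℝ → En n) : ℝ :=
  ∫ x in I01, ∫ y in I01, ⟪Rop s γ u x y, Rop s γ v x y⟫ * muW γ x y

/-- The bilinear form `B²_γ`. -/
def B2 {n : ℕ} (s : ℝ) (γ u v : ℝ → En n) : ℝ :=
  ∫ x in I01, ∫ y in I01,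
    ‖Rop s γ γ x y‖ ^ 2 * (⟪u y - u x, v y - v x⟫ / ‖γ y - γ x‖ ^ 2) * muW γ x y

/-- The bilinear form `B³_γ`. -/
def B3 {n : ℕ} (s : ℝ) (γ u v : ℝ → En n) : ℝ :=
  ∫ x in I01, ∫ y in I01,
    ‖Rop s γ γ x y‖ ^ 2 * (⟪Dg γ u x, Dg γ v x⟫ + ⟪Dg γ u y, Dg γ v y⟫) * muW γ x y

/-- The Riemannian metric `G_γ(u,v)`. -/
def Gmet {n : ℕ} (s : ℝ) (γ u v : ℝ → En n) : ℝ :=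
  2 * B1 s γ u v + (2 * s + 1) * B2 s γ u v + B3 s γ u v + innerH1g γ u v + innerL2g γ u v

/-- The distortion `distor(γ) = sup_{x ≠ y} d_γ(x,y)/|γ(y) − γ(x)|`, valued in `[0,∞]`. -/
def distorE {n : ℕ} (γ : ℝ → En n) : ℝ≥0∞ :=
  ⨆ (x ∈ I01) (y ∈ I01) (_ : x ≠ y), ENNReal.ofReal (arcDist γ x y / ‖γ y - γ x‖)

/-- The distortion, real-valued. -/
def distor {n : ℕ} (γ : ℝ → En n) : ℝ := (distorE γ).toReal

/-- A `C¹` path `[0,1] → 𝓜 ⊂ H^s(𝕋,ℝⁿ)` (with respect to the `H^s` topology), recorded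
together with its velocity field `V`. -/
structure C1Path (s : ℝ) (n : ℕ) where
  Γ : ℝ → ℝ → En n
  V : ℝ → ℝ → En n
  mem : ∀ t ∈ Set.Icc (0 : ℝ) 1, InM s (Γ t)
  memV : ∀ t ∈ Set.Icc (0 : ℝ) 1, InHs s (V t)
  isDeriv : ∀ t ∈ Set.Icc (0 : ℝ) 1,
    Tendsto (fun h : ℝ => HsNorm s fun x => h⁻¹ • (Γ (t + h) x - Γ t x) - V t x)
      (𝓝[{h : ℝ | t + h ∈ Set.Icc (0 : ℝ) 1 ∧ h ≠ 0}] 0) (𝓝 0)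
  contV : ∀ t ∈ Set.Icc (0 : ℝ) 1,
    Tendsto (fun τ : ℝ => HsNorm s fun x => V τ x - V t x) (𝓝[Set.Icc (0 : ℝ) 1] t) (𝓝 0)

/-- Length of a path with respect to `G`. -/
def pathLen {s : ℝ} {n : ℕ} (P : C1Path s n) : ℝ :=
  ∫ t in (0 : ℝ)..1, Real.sqrt (Gmet s (P.Γ t) (P.V t) (P.V t))

/-- The path (Dirichlet) energy of a path with respect to `G`. -/
def pathEnergy {s : ℝ} {n : ℕ} (P : C1Path s n) : ℝ :=
  (1 / 2) * ∫ t in (0 : ℝ)..1, Gmet s (P.Γ t) (P.V t) (P.V t)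

/-- The geodesic distance induced by `G`, valued in `[0,∞]` (`∞` if there is no path). -/
def geodDist (s : ℝ) {n : ℕ} (γ₀ γ₁ : ℝ → En n) : ℝ≥0∞ :=
  ⨅ (P : C1Path s n) (_ : P.Γ 0 = γ₀ ∧ P.Γ 1 = γ₁), ENNReal.ofReal (pathLen P)

/-- `U ⊆ 𝓜` is bounded with respect to the geodesic distance `d_G`. -/
def GBounded (s : ℝ) {n : ℕ} (U : Set (ℝ → En n)) : Prop :=
  (∀ γ ∈ U, InM s γ) ∧
    ∃ γ₀, InM s γ₀ ∧ ∃ R : ℝ, ∀ γ ∈ U, geodDist s γ γ₀ ≤ ENNReal.ofReal R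

/-- Weak convergence in the Hilbert space `H^s(𝕋,ℝⁿ)`. -/
def WeakHsTendsto {n : ℕ} (s : ℝ) (γk : ℕ → ℝ → En n) (γ : ℝ → En n) : Prop :=
  ∀ v : ℝ → En n, InHs s v →
    Tendsto (fun k => HsInner s (γk k) v) atTop (𝓝 (HsInner s γ v))

/-- Directional derivative of `γ ↦ G_γ(u,v)` at `γ` in direction `w`. -/
def DGdir {n : ℕ} (s : ℝ) (γ w u v : ℝ → En n) : ℝ :=
  deriv (fun t : ℝ => Gmet s (fun x => γ x + t • w x) u v) 0

/-- `F'` is the derivative of the path `F` with respect to the `H^s` norm, on `S`. -/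
def IsHsDerivOn {n : ℕ} (s : ℝ) (F F' : ℝ → ℝ → En n) (S : Set ℝ) : Prop :=
  ∀ t ∈ S,
    Tendsto (fun h : ℝ => HsNorm s fun x => h⁻¹ • (F (t + h) x - F t x) - F' t x)
      (𝓝[{h : ℝ | t + h ∈ S ∧ h ≠ 0}] 0) (𝓝 0)

/-- The path `F` is continuous on `S` with respect to the `H^s` norm. -/
def HsContOn {n : ℕ} (s : ℝ) (F : ℝ → ℝ → En n) (S : Set ℝ) : Prop :=
  ∀ t ∈ S, Tendsto (fun τ : ℝ => HsNorm s fun x => F τ x - F t x) (𝓝[S] t) (𝓝 0)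

/-- A solution of the geodesic initial value problem on `[0,∞)`, recorded as a triple
(position `Γ`, velocity `V`, acceleration `W`); the geodesic equation
`Γ̈ + A_Γ(Γ̇)Γ̇ = 0` is expressed weakly via the Koszul formula for the
Christoffel operator `A`. -/
def GeodesicSol {n : ℕ} (s : ℝ) (γ₀ v₀ : ℝ → En n) (Γ V W : ℝ → ℝ → En n) : Prop :=
  (∀ t ∈ Set.Ici (0 : ℝ), InM s (Γ t) ∧ InHs s (V t) ∧ InHs s (W t)) ∧
  Γ 0 = γ₀ ∧ V 0 = v₀ ∧
  IsHsDerivOn s Γ V (Set.Ici 0) ∧ IsHsDerivOn s V W (Set.Ici 0) ∧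
  HsContOn s V (Set.Ici 0) ∧ HsContOn s W (Set.Ici 0) ∧
  ∀ t ∈ Set.Ici (0 : ℝ), ∀ w : ℝ → En n, InHs s w →
    Gmet s (Γ t) (W t) w + DGdir s (Γ t) (V t) (V t) w
      - (1 / 2) * DGdir s (Γ t) w (V t) (V t) = 0

/-!
The speed `|γ'|` of an immersed curve lies between positive constants, so the arc-length distance
`d_γ` is comparable to the distance on the circle, and all the integrals defining `‖u‖_{H^s(γ)}`
are comparable to those of the fixed norm `‖D_γ u‖_{H^{s-1}}`. Passing between `D_γ u` and
`u' = |γ'| D_γ u` is a multiplication by `|γ'|^{∓1}`: the product rule for increments costs a term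
`‖u'‖_{C⁰} [γ']_{H^{s-1}}` or `‖D_γ u‖_{C⁰} [γ']_{H^{s-1}}`, which is absorbed by the Sobolev
embedding `H^{s-1} ⊂ C⁰`, available since `s - 1 > 1/2`. The resulting constants are explicit
functions of `min |γ'|`, `max |γ'|` and `[γ']_{H^{s-1}}`, and by the same embedding these three
quantities are Lipschitz in `γ` for the `H^s` norm.
-/

/-! ### Distances on the circle -/

lemma measurableSet_I01 : MeasurableSet I01 := measurableSet_Ico

lemma volume_I01 : volume I01 = 1 := by simp [I01]

lemma integrableOn_I01 {E : Type*} [NormedAddCommGroup E] {v : ℝ → E} (hv : Continuous v) :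
    IntegrableOn v I01 :=
  hv.integrableOn_Icc.mono_set Ico_subset_Icc_self

lemma dT_eq_abs_sub_round (x y : ℝ) : dT x y = |x - y - round (x - y)| :=
  le_antisymm (ciInf_le ⟨0, by rintro _ ⟨k, rfl⟩; exact abs_nonneg _⟩ _)
    (le_ciInf fun k => round_le _ k)

lemma dT_nonneg (x y : ℝ) : 0 ≤ dT x y := by
  rw [dT_eq_abs_sub_round]
  exact abs_nonneg _

lemma dT_le_abs_sub_sub_intCast (x y : ℝ) (k : ℤ) : dT x y ≤ |x - y - k| := by
  rw [dT_eq_abs_sub_round]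
  exact round_le _ k

lemma dT_le_abs_sub (x y : ℝ) : dT x y ≤ |x - y| := by
  simpa using dT_le_abs_sub_sub_intCast x y 0

lemma eq_of_dT_eq_zero {x y : ℝ} (hxy : |x - y| < 1) (h : dT x y = 0) : x = y := by
  rw [dT_eq_abs_sub_round, abs_eq_zero, sub_eq_zero] at h
  rw [h] at hxy
  have hround : round (x - y) = 0 := Int.abs_lt_one_iff.1 (by exact_mod_cast hxy)
  rwa [hround, Int.cast_zero, sub_eq_zero] at h

lemma measurable_dT : Measurable fun p : ℝ × ℝ => dT p.1 p.2 :=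
  Measurable.iInf fun k => by fun_prop

lemma mul_abs_sub_le_abs_intervalIntegral {f : ℝ → ℝ} {m : ℝ} (hf : Continuous f)
    (hm : ∀ t, m ≤ f t) (a b : ℝ) : m * |a - b| ≤ |∫ t in a..b, f t| := by
  wlog hab : a ≤ b generalizing a b
  · rw [intervalIntegral.integral_symm, abs_neg, abs_sub_comm]
    exact this b a (le_of_not_ge hab)
  · have hle := intervalIntegral.integral_mono_on (μ := volume) hab
      (continuous_const.intervalIntegrable a b) (hf.intervalIntegrable a b) fun t _ => hm t
    rw [intervalIntegral.integral_const, smul_eq_mul, mul_comm] at hle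
    rw [abs_sub_comm, abs_of_nonneg (sub_nonneg.2 hab)]
    exact hle.trans (le_abs_self _)

lemma mul_dT_le_arcDist {n : ℕ} {γ : ℝ → En n} (hγ : Continuous (deriv γ)) {m : ℝ} (hm₀ : 0 ≤ m)
    (hm : ∀ x, m ≤ ‖deriv γ x‖) (x y : ℝ) : m * dT x y ≤ arcDist γ x y := by
  refine le_ciInf fun k => ?_
  calc m * dT x y ≤ m * |x - (y + k)| := by
        rw [← sub_sub]
        gcongr
        exact dT_le_abs_sub_sub_intCast x y k
    _ ≤ |∫ t in x..(y + k), ‖deriv γ t‖| :=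
        mul_abs_sub_le_abs_intervalIntegral hγ.norm hm x (y + k)

lemma arcDist_le_mul_dT {n : ℕ} {γ : ℝ → En n} {M : ℝ} (hM : ∀ x, ‖deriv γ x‖ ≤ M) (x y : ℝ) :
    arcDist γ x y ≤ M * dT x y := by
  have hM₀ : 0 ≤ M := (norm_nonneg _).trans (hM 0)
  rw [dT, Real.mul_iInf_of_nonneg hM₀]
  refine ciInf_mono ⟨0, by rintro _ ⟨k, rfl⟩; exact abs_nonneg _⟩ fun k => ?_
  rw [sub_sub, abs_sub_comm, ← Real.norm_eq_abs]
  exact intervalIntegral.norm_integral_le_of_norm_le_const fun t _ => by simpa using hM t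

/-! ### Gagliardo seminorms -/

lemma setLIntegral_ofReal_le_mul {α β : Type*} [MeasurableSpace α] [MeasurableSpace β]
    {μ : Measure α} {ν : Measure β} {A A' : Set α} {B B' : Set β} {f g : α → β → ℝ} {c : ℝ}
    (hc : 0 ≤ c) (hA : MeasurableSet A) (hB : MeasurableSet B) (hAA' : A ⊆ A') (hBB' : B ⊆ B')
    (hfg : ∀ x ∈ A, ∀ y ∈ B, f x y ≤ c * g x y) :
    ∫⁻ x in A, ∫⁻ y in B, ENNReal.ofReal (f x y) ∂ν ∂μ ≤
      ENNReal.ofReal c * ∫⁻ x in A', ∫⁻ y in B', ENNReal.ofReal (g x y) ∂ν ∂μ := by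
  calc ∫⁻ x in A, ∫⁻ y in B, ENNReal.ofReal (f x y) ∂ν ∂μ
      ≤ ∫⁻ x in A, ∫⁻ y in B, ENNReal.ofReal c * ENNReal.ofReal (g x y) ∂ν ∂μ := by
        refine setLIntegral_mono' hA fun x hx => setLIntegral_mono' hB fun y hy => ?_
        rw [← ENNReal.ofReal_mul hc]
        exact ENNReal.ofReal_le_ofReal (hfg x hx y hy)
    _ = ENNReal.ofReal c * ∫⁻ x in A, ∫⁻ y in B, ENNReal.ofReal (g x y) ∂ν ∂μ := by
        simp only [lintegral_const_mul' _ _ ENNReal.ofReal_ne_top]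
    _ ≤ ENNReal.ofReal c * ∫⁻ x in A', ∫⁻ y in B', ENNReal.ofReal (g x y) ∂ν ∂μ := by
        gcongr

/-- The measure `dT(x,y)^{-(2σ+1)} dx dy` on the square: the Gagliardo seminorm of `v` is the
`L²` norm of the increments `v y - v x` with respect to it. -/
def gagliardoMeasure (σ : ℝ) : Measure (ℝ × ℝ) :=
  ((volume.restrict I01).prod (volume.restrict I01)).withDensity fun p =>
    ENNReal.ofReal (dT p.1 p.2 ^ (2 * σ + 1))⁻¹

/-- The real-valued Gagliardo seminorm `[v]_{H^σ}`. -/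
def gagliardoSeminorm {E : Type*} [NormedAddCommGroup E] (σ : ℝ) (v : ℝ → E) : ℝ :=
  √(gagliardoSqE σ v).toReal

/-- The space `H^σ` on the circle in the range `σ > 1/2`, where every class has a continuous
representative, which is the one we work with. -/
structure MemSlobodeckij {E : Type*} [NormedAddCommGroup E] (σ : ℝ) (v : ℝ → E) : Prop where
  periodic : Function.Periodic v 1
  continuous : Continuous v
  gagliardoSqE_lt_top : gagliardoSqE σ v < ⊤

section Gagliardo

variable {E F G : Type*} [NormedAddCommGroup E] [NormedAddCommGroup F] [NormedAddCommGroup G]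
  {σ : ℝ} {v : ℝ → E}

lemma gagliardoSeminorm_nonneg (σ : ℝ) (v : ℝ → E) : 0 ≤ gagliardoSeminorm σ v :=
  Real.sqrt_nonneg _

lemma sq_gagliardoSeminorm (σ : ℝ) (v : ℝ → E) :
    gagliardoSeminorm σ v ^ 2 = (gagliardoSqE σ v).toReal :=
  Real.sq_sqrt ENNReal.toReal_nonneg

lemma gagliardoSqE_eq_eLpNorm_sq (hv : Continuous v) :
    gagliardoSqE σ v = eLpNorm (fun p : ℝ × ℝ => v p.2 - v p.1) 2 (gagliardoMeasure σ) ^ 2 := by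
  have hincr : Measurable fun p : ℝ × ℝ => ‖v p.2 - v p.1‖ₑ ^ 2 := by
    apply Continuous.measurable
    fun_prop
  have hkernel : Measurable fun p : ℝ × ℝ => ENNReal.ofReal (dT p.1 p.2 ^ (2 * σ + 1))⁻¹ :=
    (measurable_dT.pow_const _).inv.ennreal_ofReal
  have hsq := eLpNorm_nnreal_pow_eq_lintegral (μ := gagliardoMeasure σ)
    (f := fun p : ℝ × ℝ => v p.2 - v p.1) two_ne_zero
  norm_num only [NNReal.coe_ofNat, ENNReal.rpow_ofNat, ENNReal.coe_ofNat] at hsq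
  rw [hsq, gagliardoMeasure, lintegral_withDensity_eq_lintegral_mul _ hkernel hincr,
    lintegral_prod _ (hkernel.mul hincr).aemeasurable]
  refine lintegral_congr fun x => lintegral_congr fun y => ?_
  rw [Pi.mul_apply, div_eq_inv_mul, ENNReal.ofReal_mul' (sq_nonneg _),
    ENNReal.ofReal_pow (norm_nonneg _), ofReal_norm]

lemma gagliardoSeminorm_eq_toReal_eLpNorm (hv : Continuous v) :
    gagliardoSeminorm σ v =
      (eLpNorm (fun p : ℝ × ℝ => v p.2 - v p.1) 2 (gagliardoMeasure σ)).toReal := by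
  rw [gagliardoSeminorm, gagliardoSqE_eq_eLpNorm_sq hv, ENNReal.toReal_pow,
    Real.sqrt_sq ENNReal.toReal_nonneg]

lemma MemSlobodeckij.eLpNorm_ne_top (hv : MemSlobodeckij σ v) :
    eLpNorm (fun p : ℝ × ℝ => v p.2 - v p.1) 2 (gagliardoMeasure σ) ≠ ⊤ := by
  have hfin := hv.gagliardoSqE_lt_top
  rw [gagliardoSqE_eq_eLpNorm_sq hv.continuous] at hfin
  exact fun htop => hfin.ne (by simp [htop])

section Domination

variable {w : ℝ → G} {a : ℝ → E} {b : ℝ → F} {α β : ℝ}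

lemma eLpNorm_increment_le (ha : Continuous a) (hb : Continuous b) (hα : 0 ≤ α) (hβ : 0 ≤ β)
    (h : ∀ x y, ‖w y - w x‖ ≤ α * ‖a y - a x‖ + β * ‖b y - b x‖) :
    eLpNorm (fun p : ℝ × ℝ => w p.2 - w p.1) 2 (gagliardoMeasure σ) ≤
      ENNReal.ofReal α * eLpNorm (fun p : ℝ × ℝ => a p.2 - a p.1) 2 (gagliardoMeasure σ) +
      ENNReal.ofReal β * eLpNorm (fun p : ℝ × ℝ => b p.2 - b p.1) 2 (gagliardoMeasure σ) := by
  set A : ℝ × ℝ → ℝ := fun p => ‖a p.2 - a p.1‖ with hA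
  set B : ℝ × ℝ → ℝ := fun p => ‖b p.2 - b p.1‖ with hB
  have hAm : AEStronglyMeasurable (α • A) (gagliardoMeasure σ) :=
    Continuous.aestronglyMeasurable (by fun_prop)
  have hBm : AEStronglyMeasurable (β • B) (gagliardoMeasure σ) :=
    Continuous.aestronglyMeasurable (by fun_prop)
  calc eLpNorm (fun p : ℝ × ℝ => w p.2 - w p.1) 2 (gagliardoMeasure σ)
      ≤ eLpNorm (α • A + β • B) 2 (gagliardoMeasure σ) := eLpNorm_mono_real fun p => h p.1 p.2
    _ ≤ eLpNorm (α • A) 2 (gagliardoMeasure σ) + eLpNorm (β • B) 2 (gagliardoMeasure σ) :=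
        eLpNorm_add_le hAm hBm one_le_two
    _ = _ := by
        rw [eLpNorm_const_smul, eLpNorm_const_smul, hA, hB, eLpNorm_norm, eLpNorm_norm,
          Real.enorm_of_nonneg hα, Real.enorm_of_nonneg hβ]

lemma MemSlobodeckij.of_norm_sub_le (hwp : Function.Periodic w 1) (hw : Continuous w)
    (ha : MemSlobodeckij σ a) (hb : MemSlobodeckij σ b) (hα : 0 ≤ α) (hβ : 0 ≤ β)
    (h : ∀ x y, ‖w y - w x‖ ≤ α * ‖a y - a x‖ + β * ‖b y - b x‖) : MemSlobodeckij σ w where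
  periodic := hwp
  continuous := hw
  gagliardoSqE_lt_top := by
    rw [gagliardoSqE_eq_eLpNorm_sq hw]
    refine ENNReal.pow_lt_top <|
      (eLpNorm_increment_le ha.continuous hb.continuous hα hβ h).trans_lt ?_
    exact ENNReal.add_lt_top.2 ⟨ENNReal.mul_lt_top ENNReal.ofReal_lt_top ha.eLpNorm_ne_top.lt_top,
      ENNReal.mul_lt_top ENNReal.ofReal_lt_top hb.eLpNorm_ne_top.lt_top⟩

lemma gagliardoSeminorm_le_of_norm_sub_le (hw : Continuous w) (ha : MemSlobodeckij σ a)
    (hb : MemSlobodeckij σ b) (hα : 0 ≤ α) (hβ : 0 ≤ β)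
    (h : ∀ x y, ‖w y - w x‖ ≤ α * ‖a y - a x‖ + β * ‖b y - b x‖) :
    gagliardoSeminorm σ w ≤ α * gagliardoSeminorm σ a + β * gagliardoSeminorm σ b := by
  rw [gagliardoSeminorm_eq_toReal_eLpNorm hw, gagliardoSeminorm_eq_toReal_eLpNorm ha.continuous,
    gagliardoSeminorm_eq_toReal_eLpNorm hb.continuous]
  refine ENNReal.toReal_le_of_le_ofReal (by positivity)
    ((eLpNorm_increment_le ha.continuous hb.continuous hα hβ h).trans_eq ?_)
  rw [ENNReal.ofReal_add (by positivity) (by positivity), ENNReal.ofReal_mul hα,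
    ENNReal.ofReal_mul hβ, ENNReal.ofReal_toReal ha.eLpNorm_ne_top,
    ENNReal.ofReal_toReal hb.eLpNorm_ne_top]

end Domination

end Gagliardo

section SupNorm

variable {E : Type*} [NormedAddCommGroup E] {σ : ℝ} {v w : ℝ → E}

lemma supNorm_nonneg (v : ℝ → E) : 0 ≤ supNorm v :=
  Real.iSup_nonneg fun _ => norm_nonneg _

lemma gagliardoSeminorm_neg (v : ℝ → E) : gagliardoSeminorm σ (-v) = gagliardoSeminorm σ v := by
  simp only [gagliardoSeminorm, gagliardoSqE, Pi.neg_apply, ← neg_sub', norm_neg]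

namespace MemSlobodeckij

lemma norm_le_supNorm (hv : MemSlobodeckij σ v) (x : ℝ) : ‖v x‖ ≤ supNorm v :=
  le_ciSup (f := fun x => ‖v x‖)
    ((hv.periodic.comp norm).compact_of_continuous one_ne_zero hv.continuous.norm).bddAbove x

lemma sub (hv : MemSlobodeckij σ v) (hw : MemSlobodeckij σ w) : MemSlobodeckij σ (v - w) :=
  of_norm_sub_le (hv.periodic.sub hw.periodic) (hv.continuous.sub hw.continuous) hv hw
    zero_le_one zero_le_one fun x y => by
      simpa only [one_mul, Pi.sub_apply, sub_sub_sub_comm] using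
        norm_sub_le (v y - v x) (w y - w x)

lemma abs_supNorm_sub_supNorm_le (hv : MemSlobodeckij σ v) (hw : MemSlobodeckij σ w) :
    |supNorm v - supNorm w| ≤ supNorm (v - w) := by
  have hvw := hv.sub hw
  refine abs_sub_le_iff.2 ⟨?_, ?_⟩ <;> refine sub_le_iff_le_add.2 (ciSup_le fun x => ?_)
  · calc ‖v x‖ = ‖(v - w) x + w x‖ := by rw [Pi.sub_apply, sub_add_cancel]
      _ ≤ supNorm (v - w) + supNorm w :=
          norm_add_le_of_le (hvw.norm_le_supNorm x) (hw.norm_le_supNorm x)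
  · calc ‖w x‖ = ‖v x - (v - w) x‖ := by rw [Pi.sub_apply, sub_sub_cancel]
      _ ≤ supNorm v + supNorm (v - w) :=
          norm_sub_le_of_le (hv.norm_le_supNorm x) (hvw.norm_le_supNorm x)
      _ = supNorm (v - w) + supNorm v := add_comm _ _

lemma gagliardoSeminorm_le_add_sub (hv : MemSlobodeckij σ v) (hw : MemSlobodeckij σ w) :
    gagliardoSeminorm σ v ≤ gagliardoSeminorm σ w + gagliardoSeminorm σ (v - w) := by
  simpa only [one_mul] using gagliardoSeminorm_le_of_norm_sub_le hv.continuous hw (hv.sub hw)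
    zero_le_one zero_le_one fun x y => by
      have hsplit : v y - v x = w y - w x + ((v - w) y - (v - w) x) := by
        simp only [Pi.sub_apply]
        abel
      rw [hsplit, one_mul, one_mul]
      exact norm_add_le _ _

lemma abs_gagliardoSeminorm_sub_le (hv : MemSlobodeckij σ v) (hw : MemSlobodeckij σ w) :
    |gagliardoSeminorm σ v - gagliardoSeminorm σ w| ≤ gagliardoSeminorm σ (v - w) := by
  have hvw := hv.gagliardoSeminorm_le_add_sub hw
  have hwv := hw.gagliardoSeminorm_le_add_sub hv
  rw [← neg_sub v w, gagliardoSeminorm_neg] at hwv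
  exact abs_sub_le_iff.2 ⟨by linarith, by linarith⟩

end MemSlobodeckij

end SupNorm

/-- The Hilbert norm of `H^σ` on the circle. -/
def slobodeckijNorm {E : Type*} [NormedAddCommGroup E] (σ : ℝ) (v : ℝ → E) : ℝ :=
  √((∫ x in I01, ‖v x‖ ^ 2) + gagliardoSeminorm σ v ^ 2)

section SlobodeckijNorm

variable {E F G : Type*} [NormedAddCommGroup E] [NormedAddCommGroup F] [NormedAddCommGroup G]
  {σ α β : ℝ} {w : ℝ → G} {a : ℝ → E} {b : ℝ → F}

lemma slobodeckijNorm_nonneg (σ : ℝ) (a : ℝ → E) : 0 ≤ slobodeckijNorm σ a :=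
  Real.sqrt_nonneg _

lemma sq_slobodeckijNorm (σ : ℝ) (a : ℝ → E) :
    slobodeckijNorm σ a ^ 2 = (∫ x in I01, ‖a x‖ ^ 2) + gagliardoSeminorm σ a ^ 2 :=
  Real.sq_sqrt (by positivity)

lemma gagliardoSeminorm_le_slobodeckijNorm (σ : ℝ) (a : ℝ → E) :
    gagliardoSeminorm σ a ≤ slobodeckijNorm σ a :=
  Real.le_sqrt_of_sq_le (le_add_of_nonneg_left (by positivity))

lemma slobodeckijNorm_le_of_norm_sub_le (hw : Continuous w) (ha : MemSlobodeckij σ a)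
    (hb : MemSlobodeckij σ b) (hα : 0 ≤ α) (hβ : 0 ≤ β) (hwa : ∀ x, ‖w x‖ ≤ α * ‖a x‖)
    (h : ∀ x y, ‖w y - w x‖ ≤ α * ‖a y - a x‖ + β * ‖b y - b x‖) :
    slobodeckijNorm σ w ≤ α * slobodeckijNorm σ a + β * gagliardoSeminorm σ b := by
  have hgag := gagliardoSeminorm_le_of_norm_sub_le hw ha hb hα hβ h
  have hL2 : ∫ x in I01, ‖w x‖ ^ 2 ≤ α ^ 2 * ∫ x in I01, ‖a x‖ ^ 2 := by
    have hac := ha.continuous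
    rw [← integral_const_mul]
    refine setIntegral_mono (integrableOn_I01 (by fun_prop)) (integrableOn_I01 (by fun_prop))
      fun x => ?_
    rw [← mul_pow]
    exact pow_le_pow_left₀ (norm_nonneg _) (hwa x) 2
  have hw₀ := gagliardoSeminorm_nonneg σ w
  have hb₀ := gagliardoSeminorm_nonneg σ b
  have hN₀ := slobodeckijNorm_nonneg σ a
  refine Real.sqrt_le_iff.2 ⟨by positivity, ?_⟩
  calc (∫ x in I01, ‖w x‖ ^ 2) + gagliardoSeminorm σ w ^ 2
      ≤ α ^ 2 * (∫ x in I01, ‖a x‖ ^ 2) +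
          (α * gagliardoSeminorm σ a + β * gagliardoSeminorm σ b) ^ 2 := by gcongr
    _ = (α * slobodeckijNorm σ a) ^ 2 +
          2 * α * β * gagliardoSeminorm σ a * gagliardoSeminorm σ b +
          (β * gagliardoSeminorm σ b) ^ 2 := by
        rw [mul_pow α, sq_slobodeckijNorm]
        ring
    _ ≤ (α * slobodeckijNorm σ a) ^ 2 +
          2 * α * β * slobodeckijNorm σ a * gagliardoSeminorm σ b +
          (β * gagliardoSeminorm σ b) ^ 2 := by
        gcongr
        exact gagliardoSeminorm_le_slobodeckijNorm σ a
    _ = (α * slobodeckijNorm σ a + β * gagliardoSeminorm σ b) ^ 2 := by ring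

end SlobodeckijNorm

/-! ### The Sobolev embedding -/

section Jensen

variable {α β E : Type*} [MeasurableSpace α] [MeasurableSpace β] [NormedAddCommGroup E]
  [NormedSpace ℝ E]

lemma enorm_integral_sq_le {μ : Measure α} [IsProbabilityMeasure μ] {f : α → E}
    (hf : AEStronglyMeasurable f μ) : ‖∫ x, f x ∂μ‖ₑ ^ 2 ≤ ∫⁻ x, ‖f x‖ₑ ^ 2 ∂μ := by
  have hsq := eLpNorm_nnreal_pow_eq_lintegral (μ := μ) (f := f) two_ne_zero
  norm_num only [NNReal.coe_ofNat, ENNReal.rpow_ofNat, ENNReal.coe_ofNat] at hsq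
  rw [← hsq]
  gcongr
  calc ‖∫ x, f x ∂μ‖ₑ ≤ ∫⁻ x, ‖f x‖ₑ ∂μ := enorm_integral_le_lintegral_enorm f
    _ = eLpNorm f 1 μ := eLpNorm_one_eq_lintegral_enorm.symm
    _ ≤ eLpNorm f 2 μ := eLpNorm_le_eLpNorm_of_exponent_le one_le_two hf

variable [CompleteSpace E]

lemma enorm_integral_sub_integral_sq_le {μ : Measure α} {ν : Measure β} [IsProbabilityMeasure μ]
    [IsProbabilityMeasure ν] {f : α → E} {g : β → E} (hf : Integrable f μ)
    (hg : Integrable g ν) :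
    ‖(∫ x, f x ∂μ) - ∫ y, g y ∂ν‖ₑ ^ 2 ≤ ∫⁻ x, ∫⁻ y, ‖f x - g y‖ₑ ^ 2 ∂ν ∂μ := by
  have hinner (a : E) : ‖a - ∫ y, g y ∂ν‖ₑ ^ 2 ≤ ∫⁻ y, ‖a - g y‖ₑ ^ 2 ∂ν := by
    have hconst : ∫ _, a ∂ν = a := by simp
    rw [← hconst, ← integral_sub (integrable_const a) hg, hconst]
    exact enorm_integral_sq_le (aestronglyMeasurable_const.sub hg.aestronglyMeasurable)
  have hconst : ∫ _, ∫ y, g y ∂ν ∂μ = ∫ y, g y ∂ν := by simp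
  calc ‖(∫ x, f x ∂μ) - ∫ y, g y ∂ν‖ₑ ^ 2
      = ‖∫ x, (f x - ∫ y, g y ∂ν) ∂μ‖ₑ ^ 2 := by
        rw [integral_sub hf (integrable_const _), hconst]
    _ ≤ ∫⁻ x, ‖f x - ∫ y, g y ∂ν‖ₑ ^ 2 ∂μ :=
        enorm_integral_sq_le (hf.aestronglyMeasurable.sub aestronglyMeasurable_const)
    _ ≤ ∫⁻ x, ∫⁻ y, ‖f x - g y‖ₑ ^ 2 ∂ν ∂μ := lintegral_mono fun x => hinner (f x)

lemma enorm_average_sub_average_sq_le {μ : Measure α} {ν : Measure β} [IsFiniteMeasure μ]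
    [IsFiniteMeasure ν] [NeZero μ] [NeZero ν] {f : α → E} {g : β → E} (hf : Integrable f μ)
    (hg : Integrable g ν) :
    ‖(⨍ x, f x ∂μ) - ⨍ y, g y ∂ν‖ₑ ^ 2 ≤ ⨍⁻ x, ⨍⁻ y, ‖f x - g y‖ₑ ^ 2 ∂ν ∂μ :=
  enorm_integral_sub_integral_sq_le hf.to_average hg.to_average

end Jensen

/-- The image of `I01` under the homothety of ratio `r` centred at `x`. For `x ∈ I01` these
intervals shrink to `x` without leaving `I01`, so that averages over them can be compared by
means of the Gagliardo seminorm. -/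
def shrunkInterval (x r : ℝ) : Set ℝ := Ico ((1 - r) * x) ((1 - r) * x + r)

section ShrunkInterval

variable {x r r' : ℝ}

lemma measurableSet_shrunkInterval (x r : ℝ) : MeasurableSet (shrunkInterval x r) :=
  measurableSet_Ico

lemma volume_shrunkInterval (x r : ℝ) : volume (shrunkInterval x r) = ENNReal.ofReal r := by
  rw [shrunkInterval, Real.volume_Ico, add_sub_cancel_left]

lemma volumeReal_shrunkInterval (x : ℝ) (hr : 0 ≤ r) :
    volume.real (shrunkInterval x r) = r := by
  rw [Measure.real, volume_shrunkInterval, ENNReal.toReal_ofReal hr]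

lemma shrunkInterval_one (x : ℝ) : shrunkInterval x 1 = I01 := by
  simp [shrunkInterval, I01]

lemma shrunkInterval_subset_shrunkInterval (hx : x ∈ I01) (hr : r ≤ r') :
    shrunkInterval x r ⊆ shrunkInterval x r' :=
  Ico_subset_Ico (by nlinarith [hx.1]) (by nlinarith [hx.2])

lemma shrunkInterval_subset_I01 (hx : x ∈ I01) (hr : r ≤ 1) : shrunkInterval x r ⊆ I01 :=
  shrunkInterval_one x ▸ shrunkInterval_subset_shrunkInterval hx hr

lemma shrunkInterval_subset_closedBall (hx : x ∈ I01) (hr : 0 ≤ r) :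
    shrunkInterval x r ⊆ Metric.closedBall x r := fun y hy => by
  rw [Metric.mem_closedBall, Real.dist_eq, abs_le]
  constructor <;> nlinarith [hx.1, hx.2, hy.1, hy.2]

lemma abs_sub_le_of_mem_shrunkInterval {y z : ℝ} (hy : y ∈ shrunkInterval x r)
    (hz : z ∈ shrunkInterval x r) : |y - z| ≤ r :=
  abs_le.2 ⟨by linarith [hy.1, hz.2], by linarith [hy.2, hz.1]⟩

end ShrunkInterval

section Embedding

lemma half_rpow_lt_one {σ : ℝ} (hσ : 1 / 2 < σ) : (1 / 2 : ℝ) ^ (σ - 1 / 2) < 1 :=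
  Real.rpow_lt_one (by norm_num) (by norm_num) (by linarith)

variable {E : Type*} [NormedAddCommGroup E] {σ x r : ℝ} {v : ℝ → E}

lemma setLIntegral_enorm_sub_sq_le {A B : Set ℝ} (hσ : -(1 / 2) < σ) (hr : 0 ≤ r)
    (hA : MeasurableSet A) (hB : MeasurableSet B) (hA01 : A ⊆ I01) (hB01 : B ⊆ I01)
    (hAB : ∀ x ∈ A, ∀ y ∈ B, |x - y| ≤ r) (v : ℝ → E) :
    ∫⁻ x in A, ∫⁻ y in B, ‖v x - v y‖ₑ ^ 2 ≤
      ENNReal.ofReal (r ^ (2 * σ + 1)) * gagliardoSqE σ v := by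
  simp only [← ofReal_norm, ← ENNReal.ofReal_pow (norm_nonneg _)]
  refine setLIntegral_ofReal_le_mul (by positivity) hA hB hA01 hB01 fun x hx y hy => ?_
  rcases (dT_nonneg x y).eq_or_lt with hdT | hdT
  · have hxy : x = y := eq_of_dT_eq_zero
      (abs_sub_lt_of_nonneg_of_lt (hA01 hx).1 (hA01 hx).2 (hB01 hy).1 (hB01 hy).2) hdT.symm
    simp [hxy]
  · rw [norm_sub_rev, mul_div_left_comm]
    refine le_mul_of_one_le_right (sq_nonneg _) ((one_le_div (by positivity)).2 ?_)
    gcongr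
    · linarith
    · exact (dT_le_abs_sub x y).trans (hAB x hx y hy)

variable [NormedSpace ℝ E]

lemma tendsto_setAverage_shrunkInterval [CompleteSpace E] (hv : Continuous v) (hx : x ∈ I01) :
    Tendsto (fun r => ⨍ y in shrunkInterval x r, v y) (𝓝[>] 0) (𝓝 (v x)) := by
  refine Metric.nhds_basis_closedBall.tendsto_right_iff.2 fun ε hε => ?_
  obtain ⟨δ, hδ, hvδ⟩ := Metric.continuousAt_iff.1 (hv.continuousAt (x := x)) ε hε
  have hsmall : Iio (min δ 1) ∈ 𝓝 (0 : ℝ) := Iio_mem_nhds (by positivity)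
  filter_upwards [self_mem_nhdsWithin, mem_nhdsWithin_of_mem_nhds hsmall] with r hr₀ hr
  have hr₀ : 0 < r := hr₀
  rw [mem_Iio, lt_min_iff] at hr
  refine (convex_closedBall (v x) ε).set_average_mem Metric.isClosed_closedBall ?_ ?_ ?_ ?_
  · rw [volume_shrunkInterval]
    exact (ENNReal.ofReal_pos.2 hr₀).ne'
  · rw [volume_shrunkInterval]
    exact ENNReal.ofReal_ne_top
  · refine ae_restrict_of_forall_mem (measurableSet_shrunkInterval x r) fun y hy => ?_
    exact (hvδ ((shrunkInterval_subset_closedBall hx hr₀.le hy).trans_lt hr.1)).le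
  · exact (integrableOn_I01 hv).mono_set (shrunkInterval_subset_I01 hx hr.2.le)

namespace MemSlobodeckij

variable [CompleteSpace E]

lemma norm_setAverage_sub_setAverage_sq_le {A B : Set ℝ} (hv : MemSlobodeckij σ v)
    (hσ : -(1 / 2) < σ) (hr : 0 ≤ r) (hA : MeasurableSet A) (hB : MeasurableSet B)
    (hA01 : A ⊆ I01) (hB01 : B ⊆ I01) (hA₀ : volume A ≠ 0) (hB₀ : volume B ≠ 0)
    (hAB : ∀ x ∈ A, ∀ y ∈ B, |x - y| ≤ r) :
    ‖(⨍ x in A, v x) - ⨍ y in B, v y‖ ^ 2 ≤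
      r ^ (2 * σ + 1) * gagliardoSeminorm σ v ^ 2 / (volume.real A * volume.real B) := by
  have hfin {C : Set ℝ} (hC : C ⊆ I01) : volume C < ⊤ :=
    (measure_mono hC).trans_lt (by simp [volume_I01])
  have : Fact (volume A < ⊤) := ⟨hfin hA01⟩
  have : Fact (volume B < ⊤) := ⟨hfin hB01⟩
  have : NeZero (volume.restrict A) := ⟨Measure.restrict_eq_zero.not.2 hA₀⟩
  have : NeZero (volume.restrict B) := ⟨Measure.restrict_eq_zero.not.2 hB₀⟩
  have hint := integrableOn_I01 hv.continuous
  have hle : ‖(⨍ x in A, v x) - ⨍ y in B, v y‖ₑ ^ 2 ≤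
      ENNReal.ofReal (r ^ (2 * σ + 1)) * gagliardoSqE σ v / (volume A * volume B) := by
    calc ‖(⨍ x in A, v x) - ⨍ y in B, v y‖ₑ ^ 2
        ≤ ⨍⁻ x in A, ⨍⁻ y in B, ‖v x - v y‖ₑ ^ 2 ∂volume ∂volume :=
          enorm_average_sub_average_sq_le (hint.mono_set hA01) (hint.mono_set hB01)
      _ = (∫⁻ x in A, ∫⁻ y in B, ‖v x - v y‖ₑ ^ 2) / (volume A * volume B) := by
          simp only [setLAverage_eq, div_eq_mul_inv]
          rw [lintegral_mul_const' _ _ (ENNReal.inv_ne_top.2 hB₀), mul_assoc, mul_comm (volume A),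
            ENNReal.mul_inv (Or.inl hB₀) (Or.inl (hfin hB01).ne)]
      _ ≤ _ := by
          gcongr
          exact setLIntegral_enorm_sub_sq_le hσ hr hA hB hA01 hB01 hAB v
  have hreal := ENNReal.toReal_mono (ENNReal.div_ne_top (ENNReal.mul_ne_top ENNReal.ofReal_ne_top
    hv.gagliardoSqE_lt_top.ne) (mul_ne_zero hA₀ hB₀)) hle
  rwa [ENNReal.toReal_pow, toReal_enorm, ENNReal.toReal_div, ENNReal.toReal_mul,
    ENNReal.toReal_mul, ENNReal.toReal_ofReal (by positivity), ← sq_gagliardoSeminorm] at hreal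

lemma dist_setAverage_shrunkInterval_le (hv : MemSlobodeckij σ v) (hσ : -(1 / 2) < σ)
    (hx : x ∈ I01) (hr₀ : 0 < r) (hr : r ≤ 1) :
    dist (⨍ y in shrunkInterval x r, v y) (⨍ y in shrunkInterval x (r / 2), v y) ≤
      √2 * gagliardoSeminorm σ v * r ^ (σ - 1 / 2) := by
  have hhalf : r / 2 ≤ r := half_le_self hr₀.le
  have hpos {t : ℝ} (ht : 0 < t) : volume (shrunkInterval x t) ≠ 0 := by
    rw [volume_shrunkInterval]
    exact (ENNReal.ofReal_pos.2 ht).ne'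
  have hsq := hv.norm_setAverage_sub_setAverage_sq_le hσ hr₀.le (measurableSet_shrunkInterval x r)
    (measurableSet_shrunkInterval x (r / 2)) (shrunkInterval_subset_I01 hx hr)
    (shrunkInterval_subset_I01 hx (hhalf.trans hr)) (hpos hr₀) (hpos (half_pos hr₀))
    fun y hy z hz => abs_sub_le_of_mem_shrunkInterval hy
      (shrunkInterval_subset_shrunkInterval hx hhalf hz)
  rw [volumeReal_shrunkInterval x hr₀.le, volumeReal_shrunkInterval x (half_pos hr₀).le] at hsq
  rw [dist_eq_norm]
  refine le_of_sq_le_sq (hsq.trans_eq ?_) (by have := gagliardoSeminorm_nonneg σ v; positivity)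
  have hpow : r ^ (2 * σ + 1) = (r ^ (σ - 1 / 2)) ^ 2 * r ^ 2 := by
    rw [← Real.rpow_mul_natCast hr₀.le, ← Real.rpow_natCast r 2, ← Real.rpow_add hr₀]
    congr 1
    push_cast
    ring
  rw [hpow, mul_pow, mul_pow, Real.sq_sqrt zero_le_two]
  field_simp

lemma dist_setAverage_I01_le (hv : MemSlobodeckij σ v) (hσ : 1 / 2 < σ) (hx : x ∈ I01) :
    dist (⨍ y in I01, v y) (v x) ≤
      √2 / (1 - (1 / 2) ^ (σ - 1 / 2)) * gagliardoSeminorm σ v := by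
  have hlim : Tendsto (fun k : ℕ => ⨍ y in shrunkInterval x ((1 / 2) ^ k), v y) atTop
      (𝓝 (v x)) :=
    (tendsto_setAverage_shrunkInterval hv.continuous hx).comp <|
      tendsto_nhdsWithin_iff.2 ⟨tendsto_pow_atTop_nhds_zero_of_lt_one (by norm_num) (by norm_num),
        Eventually.of_forall fun k => by simp⟩
  have hstep (k : ℕ) := hv.dist_setAverage_shrunkInterval_le (r := (1 / 2) ^ k) (by linarith) hx
    (by positivity) (pow_le_one₀ (by norm_num) (by norm_num))
  have hsum := dist_le_of_le_geometric_of_tendsto₀ ((1 / 2 : ℝ) ^ (σ - 1 / 2))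
    (√2 * gagliardoSeminorm σ v) (half_rpow_lt_one hσ) (fun k => ?_) hlim
  · rwa [pow_zero, shrunkInterval_one, mul_div_right_comm] at hsum
  · convert hstep k using 1
    · rw [pow_succ, mul_one_div]
    · rw [Real.rpow_pow_comm (by norm_num)]

end MemSlobodeckij

/-- A bound for the norm of the embedding of `H^σ` into `C⁰` for `σ > 1/2`: the first summand
controls the mean value and the second one, a geometric series over dyadic scales, the
oscillation. -/
def sobolevConst (σ : ℝ) : ℝ := 1 + √2 / (1 - (1 / 2) ^ (σ - 1 / 2))

lemma sobolevConst_pos (hσ : 1 / 2 < σ) : 0 < sobolevConst σ := by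
  have := sub_pos.2 (half_rpow_lt_one hσ)
  rw [sobolevConst]
  positivity

lemma norm_setAverage_I01_le (hv : Continuous v) :
    ‖⨍ y in I01, v y‖ ≤ √(∫ x in I01, ‖v x‖ ^ 2) := by
  have : IsProbabilityMeasure (volume.restrict I01) := ⟨by simp [volume_I01]⟩
  rw [average_eq_integral]
  refine Real.le_sqrt_of_sq_le ?_
  have hjensen := enorm_integral_sq_le (μ := volume.restrict I01) hv.aestronglyMeasurable
  simp only [← ofReal_norm, ← ENNReal.ofReal_pow (norm_nonneg _)] at hjensen
  rwa [← ofReal_integral_eq_lintegral_ofReal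
    (integrableOn_I01 (v := fun x => ‖v x‖ ^ 2) (by fun_prop)) (ae_of_all _ fun x => sq_nonneg _),
    ENNReal.ofReal_le_ofReal_iff (by positivity)] at hjensen

lemma MemSlobodeckij.supNorm_le [CompleteSpace E] (hv : MemSlobodeckij σ v) (hσ : 1 / 2 < σ) :
    supNorm v ≤ sobolevConst σ * slobodeckijNorm σ v := by
  have hL2 : √(∫ x in I01, ‖v x‖ ^ 2) ≤ slobodeckijNorm σ v :=
    Real.sqrt_le_sqrt (le_add_of_nonneg_right (sq_nonneg _))
  have hconst : 0 ≤ √2 / (1 - (1 / 2) ^ (σ - 1 / 2)) := by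
    have := sub_pos.2 (half_rpow_lt_one hσ)
    positivity
  refine ciSup_le fun x => ?_
  have hfract : v (Int.fract x) = v x := by
    simpa using hv.periodic.sub_int_mul_eq (x := x) ⌊x⌋
  calc ‖v x‖ = dist (v (Int.fract x)) 0 := by rw [hfract, dist_zero_right]
    _ ≤ dist (v (Int.fract x)) (⨍ y in I01, v y) + dist (⨍ y in I01, v y) 0 :=
        dist_triangle _ _ _
    _ ≤ √2 / (1 - (1 / 2) ^ (σ - 1 / 2)) * slobodeckijNorm σ v + slobodeckijNorm σ v := by
        rw [dist_comm, dist_zero_right]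
        gcongr
        · exact (hv.dist_setAverage_I01_le hσ ⟨Int.fract_nonneg x, Int.fract_lt_one x⟩).trans
            (by gcongr; exact gagliardoSeminorm_le_slobodeckijNorm σ v)
        · exact (norm_setAverage_I01_le hv.continuous).trans hL2
    _ = sobolevConst σ * slobodeckijNorm σ v := by
        rw [sobolevConst]
        ring

end Embedding

/-! ### Comparison of the norms -/

/-- Immersed closed curves of class `H^s`; contrary to `InM`, self-intersections are allowed. -/
structure IsHsImmersion {n : ℕ} (s : ℝ) (γ : ℝ → En n) : Prop where
  inHs : InHs s γ
  deriv_ne_zero : ∀ x, deriv γ x ≠ 0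

/-- The minimum of `|γ'|`, written as an infimum. -/
def minSpeed {n : ℕ} (γ : ℝ → En n) : ℝ := ⨅ x, ‖deriv γ x‖

section NormComparison

variable {n : ℕ} {s m M : ℝ} {γ u : ℝ → En n}

lemma InM.isHsImmersion (hγ : InM s γ) : IsHsImmersion s γ := ⟨hγ.1, hγ.2.2⟩

namespace InHs

lemma continuous (hu : InHs s u) : Continuous u := hu.2.1.continuous

lemma memSlobodeckij_deriv (hu : InHs s u) : MemSlobodeckij (s - 1) (deriv u) where
  periodic x := by rw [← deriv_comp_add_const, funext hu.1]
  continuous := hu.2.1.continuous_deriv le_rfl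
  gagliardoSqE_lt_top := hu.2.2

end InHs

lemma minSpeed_le (γ : ℝ → En n) (x : ℝ) : minSpeed γ ≤ ‖deriv γ x‖ :=
  ciInf_le ⟨0, by rintro _ ⟨y, rfl⟩; exact norm_nonneg _⟩ x

lemma IsHsImmersion.minSpeed_pos (hγ : IsHsImmersion s γ) : 0 < minSpeed γ := by
  have hderiv := hγ.inHs.memSlobodeckij_deriv
  have hcompact : IsCompact (range fun x => ‖deriv γ x‖) :=
    (hderiv.periodic.comp norm).compact_of_continuous one_ne_zero hderiv.continuous.norm
  obtain ⟨x, hx⟩ := hcompact.sInf_mem (range_nonempty _)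
  exact (norm_pos_iff.2 (hγ.deriv_ne_zero x)).trans_eq hx

lemma arcDist_nonneg (γ : ℝ → En n) (x y : ℝ) : 0 ≤ arcDist γ x y :=
  Real.iInf_nonneg fun _ => abs_nonneg _

lemma gagGammaSqE_eq (hs : s ≠ 1 / 2) (γ u : ℝ → En n) :
    gagGammaSqE s γ u = ∫⁻ x in I01, ∫⁻ y in I01,
      ENNReal.ofReal (‖Dg γ u y - Dg γ u x‖ ^ 2 * (‖deriv γ x‖ * ‖deriv γ y‖) /
        arcDist γ x y ^ (2 * (s - 1) + 1)) := by
  have hexp : 2 * (s - 1) + 1 ≠ 0 := fun h => hs (by linarith)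
  simp only [gagGammaSqE, nuW, div_mul_div_comm,
    Real.rpow_add_one' (arcDist_nonneg γ _ _) hexp]

lemma gagGammaSqE_le_mul_gagliardoSqE (hs : 1 / 2 < s) (hγ : Continuous (deriv γ)) (hm₀ : 0 < m)
    (hm : ∀ x, m ≤ ‖deriv γ x‖) (hM : ∀ x, ‖deriv γ x‖ ≤ M) (u : ℝ → En n) :
    gagGammaSqE s γ u ≤
      ENNReal.ofReal (M ^ 2 / m ^ (2 * (s - 1) + 1)) * gagliardoSqE (s - 1) (Dg γ u) := by
  have hM₀ : 0 ≤ M := (norm_nonneg _).trans (hM 0)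
  have hexp : 0 < 2 * (s - 1) + 1 := by linarith
  rw [gagGammaSqE_eq hs.ne']
  refine setLIntegral_ofReal_le_mul (by positivity) measurableSet_I01 measurableSet_I01 Subset.rfl
    Subset.rfl fun x _ y _ => ?_
  have harc_lower := mul_dT_le_arcDist hγ hm₀.le hm x y
  rcases (dT_nonneg x y).eq_or_lt with hdT | hdT
  · have harc : arcDist γ x y = 0 :=
      le_antisymm (by simpa [← hdT] using arcDist_le_mul_dT hM x y) (arcDist_nonneg γ x y)
    rw [harc, ← hdT, Real.zero_rpow hexp.ne']
    simp only [div_zero, mul_zero, le_refl]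
  · calc ‖Dg γ u y - Dg γ u x‖ ^ 2 * (‖deriv γ x‖ * ‖deriv γ y‖) /
          arcDist γ x y ^ (2 * (s - 1) + 1)
        ≤ ‖Dg γ u y - Dg γ u x‖ ^ 2 * (M * M) / (m * dT x y) ^ (2 * (s - 1) + 1) := by
          gcongr
          exacts [hM x, hM y]
      _ = _ := by
          rw [Real.mul_rpow hm₀.le hdT.le]
          ring

lemma gagliardoSqE_le_mul_gagGammaSqE (hs : 1 / 2 < s) (hγ : Continuous (deriv γ)) (hm₀ : 0 < m)
    (hm : ∀ x, m ≤ ‖deriv γ x‖) (hM : ∀ x, ‖deriv γ x‖ ≤ M) (u : ℝ → En n) :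
    gagliardoSqE (s - 1) (Dg γ u) ≤
      ENNReal.ofReal (M ^ (2 * (s - 1) + 1) / m ^ 2) * gagGammaSqE s γ u := by
  have hM₀ : 0 < M := hm₀.trans_le ((hm 0).trans (hM 0))
  have hexp : 0 < 2 * (s - 1) + 1 := by linarith
  rw [gagGammaSqE_eq hs.ne']
  refine setLIntegral_ofReal_le_mul (by positivity) measurableSet_I01 measurableSet_I01 Subset.rfl
    Subset.rfl fun x _ y _ => ?_
  rcases (dT_nonneg x y).eq_or_lt with hdT | hdT
  · rw [← hdT, Real.zero_rpow hexp.ne', div_zero]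
    have := arcDist_nonneg γ x y
    positivity
  · have harc : 0 < arcDist γ x y :=
      (mul_pos hm₀ hdT).trans_le (mul_dT_le_arcDist hγ hm₀.le hm x y)
    calc ‖Dg γ u y - Dg γ u x‖ ^ 2 / dT x y ^ (2 * (s - 1) + 1)
        = M ^ (2 * (s - 1) + 1) / m ^ 2 *
            (‖Dg γ u y - Dg γ u x‖ ^ 2 * (m * m) / (M * dT x y) ^ (2 * (s - 1) + 1)) := by
          rw [Real.mul_rpow hM₀.le hdT.le]
          field_simp
      _ ≤ _ := by
          gcongr
          exacts [hm x, hm y, arcDist_le_mul_dT hM x y]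

lemma innerL2g_self (γ u : ℝ → En n) : innerL2g γ u u = ∫ x in I01, ‖u x‖ ^ 2 * ‖deriv γ x‖ := by
  simp only [innerL2g, real_inner_self_eq_norm_sq]

lemma innerL2g_self_nonneg (γ u : ℝ → En n) : 0 ≤ innerL2g γ u u := by
  rw [innerL2g_self]
  positivity

lemma innerL2g_self_le (hγ : Continuous (deriv γ)) (hM : ∀ x, ‖deriv γ x‖ ≤ M)
    (hu : Continuous u) : innerL2g γ u u ≤ M * ∫ x in I01, ‖u x‖ ^ 2 := by
  rw [innerL2g_self, mul_comm, ← integral_mul_const]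
  refine setIntegral_mono (integrableOn_I01 (by fun_prop)) (integrableOn_I01 (by fun_prop))
    fun x => ?_
  gcongr
  exact hM x

lemma mul_integral_norm_sq_le_innerL2g_self (hγ : Continuous (deriv γ))
    (hm : ∀ x, m ≤ ‖deriv γ x‖) (hu : Continuous u) :
    m * ∫ x in I01, ‖u x‖ ^ 2 ≤ innerL2g γ u u := by
  rw [innerL2g_self, mul_comm, ← integral_mul_const]
  refine setIntegral_mono (integrableOn_I01 (by fun_prop)) (integrableOn_I01 (by fun_prop))
    fun x => ?_
  gcongr
  exact hm x

end NormComparison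

lemma norm_smul_sub_smul_le {E : Type*} [NormedAddCommGroup E] [NormedSpace ℝ E] (c d : ℝ)
    (a b : E) : ‖c • a - d • b‖ ≤ ‖c‖ * ‖a - b‖ + ‖b‖ * ‖c - d‖ := by
  calc ‖c • a - d • b‖ = ‖c • (a - b) + (c - d) • b‖ := by
        rw [smul_sub, sub_smul, sub_add_sub_cancel]
    _ ≤ ‖c‖ * ‖a - b‖ + ‖b‖ * ‖c - d‖ := by
        rw [mul_comm ‖b‖, ← norm_smul, ← norm_smul]
        exact norm_add_le _ _

lemma abs_inv_sub_inv_le {a b m : ℝ} (hm : 0 < m) (ha : m ≤ a) (hb : m ≤ b) :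
    |a⁻¹ - b⁻¹| ≤ m⁻¹ ^ 2 * |a - b| := by
  have ha₀ := hm.trans_le ha
  have hb₀ := hm.trans_le hb
  rw [inv_sub_inv ha₀.ne' hb₀.ne', abs_div, abs_sub_comm, abs_of_pos (mul_pos ha₀ hb₀),
    div_eq_inv_mul, inv_pow, sq]
  gcongr

section NormEquivalence

variable {n : ℕ} {s : ℝ} {γ u : ℝ → En n}

/-- The upper constant in the comparison of `‖·‖_{H^s(γ)}` with `‖·‖_{H^s}`. -/
def upperConst (s : ℝ) (γ : ℝ → En n) : ℝ :=
  √(supNorm (deriv γ) +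
    (supNorm (deriv γ) + supNorm (deriv γ) ^ 2 / minSpeed γ ^ (2 * (s - 1) + 1)) *
      ((minSpeed γ)⁻¹ + (minSpeed γ)⁻¹ ^ 2 *
        (sobolevConst (s - 1) * gagliardoSeminorm (s - 1) (deriv γ))) ^ 2)

/-- The lower constant in the comparison of `‖·‖_{H^s(γ)}` with `‖·‖_{H^s}`. -/
def lowerConst (s : ℝ) (γ : ℝ → En n) : ℝ :=
  (√((minSpeed γ)⁻¹ +
    ((minSpeed γ)⁻¹ + supNorm (deriv γ) ^ (2 * (s - 1) + 1) / minSpeed γ ^ 2) *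
      (supNorm (deriv γ) +
        sobolevConst (s - 1) * gagliardoSeminorm (s - 1) (deriv γ)) ^ 2))⁻¹

lemma HsNormSq_eq (s : ℝ) (u : ℝ → En n) :
    HsNormSq s u = (∫ x in I01, ‖u x‖ ^ 2) + slobodeckijNorm (s - 1) (deriv u) ^ 2 := by
  rw [HsNormSq, sq_slobodeckijNorm, sq_gagliardoSeminorm, add_assoc]

namespace IsHsImmersion

lemma norm_deriv_le (hγ : IsHsImmersion s γ) (x : ℝ) : ‖deriv γ x‖ ≤ supNorm (deriv γ) :=
  hγ.inHs.memSlobodeckij_deriv.norm_le_supNorm x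

lemma supNorm_deriv_pos (hγ : IsHsImmersion s γ) : 0 < supNorm (deriv γ) :=
  hγ.minSpeed_pos.trans_le ((minSpeed_le γ 0).trans (hγ.norm_deriv_le 0))

lemma norm_Dg_le (hγ : IsHsImmersion s γ) (u : ℝ → En n) (x : ℝ) :
    ‖Dg γ u x‖ ≤ (minSpeed γ)⁻¹ * ‖deriv u x‖ := by
  rw [Dg, norm_smul, norm_inv, norm_norm]
  gcongr
  exacts [hγ.minSpeed_pos, minSpeed_le γ x]

lemma norm_Dg_sub_le (hγ : IsHsImmersion s γ) (hu : InHs s u) (x y : ℝ) :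
    ‖Dg γ u y - Dg γ u x‖ ≤ (minSpeed γ)⁻¹ * ‖deriv u y - deriv u x‖ +
      (minSpeed γ)⁻¹ ^ 2 * supNorm (deriv u) * ‖deriv γ y - deriv γ x‖ := by
  refine (norm_smul_sub_smul_le _ _ _ _).trans (add_le_add ?_ ?_)
  · rw [norm_inv, norm_norm]
    gcongr
    exacts [hγ.minSpeed_pos, minSpeed_le γ y]
  · rw [mul_right_comm, mul_comm, Real.norm_eq_abs]
    gcongr
    · exact (abs_inv_sub_inv_le hγ.minSpeed_pos (minSpeed_le γ y) (minSpeed_le γ x)).trans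
        (by gcongr; exact abs_norm_sub_norm_le _ _)
    · exact hu.memSlobodeckij_deriv.norm_le_supNorm x

lemma memSlobodeckij_Dg (hγ : IsHsImmersion s γ) (hu : InHs s u) :
    MemSlobodeckij (s - 1) (Dg γ u) := by
  have hγ' := hγ.inHs.memSlobodeckij_deriv
  have hu' := hu.memSlobodeckij_deriv
  have := hγ.minSpeed_pos
  have := supNorm_nonneg (deriv u)
  refine .of_norm_sub_le (fun x => ?_) ?_ hu' hγ' (by positivity) (by positivity)
    (hγ.norm_Dg_sub_le hu)
  · simp only [Dg, hγ'.periodic x, hu'.periodic x]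
  · exact (hγ'.continuous.norm.inv₀ fun x => norm_ne_zero_iff.2 (hγ.deriv_ne_zero x)).smul
      hu'.continuous

lemma deriv_eq_smul_Dg (hγ : IsHsImmersion s γ) (u : ℝ → En n) (x : ℝ) :
    deriv u x = ‖deriv γ x‖ • Dg γ u x :=
  (smul_inv_smul₀ (norm_ne_zero_iff.2 (hγ.deriv_ne_zero x)) _).symm

lemma slobodeckijNorm_Dg_le (hs : 3 / 2 < s) (hγ : IsHsImmersion s γ) (hu : InHs s u) :
    slobodeckijNorm (s - 1) (Dg γ u) ≤
      ((minSpeed γ)⁻¹ + (minSpeed γ)⁻¹ ^ 2 *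
        (sobolevConst (s - 1) * gagliardoSeminorm (s - 1) (deriv γ))) *
        slobodeckijNorm (s - 1) (deriv u) := by
  have hu' := hu.memSlobodeckij_deriv
  have := hγ.minSpeed_pos
  have := supNorm_nonneg (deriv u)
  calc slobodeckijNorm (s - 1) (Dg γ u)
      ≤ (minSpeed γ)⁻¹ * slobodeckijNorm (s - 1) (deriv u) +
          (minSpeed γ)⁻¹ ^ 2 * supNorm (deriv u) * gagliardoSeminorm (s - 1) (deriv γ) :=
        slobodeckijNorm_le_of_norm_sub_le (hγ.memSlobodeckij_Dg hu).continuous hu'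
          hγ.inHs.memSlobodeckij_deriv (by positivity) (by positivity) (hγ.norm_Dg_le u)
          (hγ.norm_Dg_sub_le hu)
    _ ≤ (minSpeed γ)⁻¹ * slobodeckijNorm (s - 1) (deriv u) + (minSpeed γ)⁻¹ ^ 2 *
          (sobolevConst (s - 1) * slobodeckijNorm (s - 1) (deriv u)) *
          gagliardoSeminorm (s - 1) (deriv γ) := by
        have := gagliardoSeminorm_nonneg (s - 1) (deriv γ)
        gcongr
        exact hu'.supNorm_le (by linarith)
    _ = _ := by ring

lemma slobodeckijNorm_deriv_le (hs : 3 / 2 < s) (hγ : IsHsImmersion s γ) (hu : InHs s u) :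
    slobodeckijNorm (s - 1) (deriv u) ≤
      (supNorm (deriv γ) + sobolevConst (s - 1) * gagliardoSeminorm (s - 1) (deriv γ)) *
        slobodeckijNorm (s - 1) (Dg γ u) := by
  have hDg := hγ.memSlobodeckij_Dg hu
  calc slobodeckijNorm (s - 1) (deriv u)
      ≤ supNorm (deriv γ) * slobodeckijNorm (s - 1) (Dg γ u) +
          supNorm (Dg γ u) * gagliardoSeminorm (s - 1) (deriv γ) := by
        refine slobodeckijNorm_le_of_norm_sub_le hu.memSlobodeckij_deriv.continuous hDg
          hγ.inHs.memSlobodeckij_deriv (supNorm_nonneg _) (supNorm_nonneg _) (fun x => ?_)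
          fun x y => ?_
        · rw [hγ.deriv_eq_smul_Dg u x, norm_smul, norm_norm]
          gcongr
          exact hγ.norm_deriv_le x
        · rw [hγ.deriv_eq_smul_Dg u x, hγ.deriv_eq_smul_Dg u y]
          refine (norm_smul_sub_smul_le _ _ _ _).trans ?_
          rw [norm_norm]
          gcongr
          exacts [hγ.norm_deriv_le y, supNorm_nonneg _, hDg.norm_le_supNorm x,
            abs_norm_sub_norm_le _ _]
    _ ≤ supNorm (deriv γ) * slobodeckijNorm (s - 1) (Dg γ u) +
          sobolevConst (s - 1) * slobodeckijNorm (s - 1) (Dg γ u) *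
          gagliardoSeminorm (s - 1) (deriv γ) := by
        have := gagliardoSeminorm_nonneg (s - 1) (deriv γ)
        gcongr
        exact hDg.supNorm_le (by linarith)
    _ = _ := by ring

lemma gagGammaSq_le (hs : 1 / 2 < s) (hγ : IsHsImmersion s γ) (hu : InHs s u) :
    gagGammaSq s γ u ≤ supNorm (deriv γ) ^ 2 / minSpeed γ ^ (2 * (s - 1) + 1) *
      gagliardoSeminorm (s - 1) (Dg γ u) ^ 2 := by
  have hle := gagGammaSqE_le_mul_gagliardoSqE hs
    hγ.inHs.memSlobodeckij_deriv.continuous hγ.minSpeed_pos (minSpeed_le γ) hγ.norm_deriv_le u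
  have hreal := ENNReal.toReal_mono (ENNReal.mul_ne_top ENNReal.ofReal_ne_top
    (hγ.memSlobodeckij_Dg hu).gagliardoSqE_lt_top.ne) hle
  have := hγ.minSpeed_pos
  rwa [ENNReal.toReal_mul, ENNReal.toReal_ofReal (by positivity), ← sq_gagliardoSeminorm] at hreal

lemma sq_gagliardoSeminorm_Dg_le (hs : 1 / 2 < s) (hγ : IsHsImmersion s γ) (hu : InHs s u) :
    gagliardoSeminorm (s - 1) (Dg γ u) ^ 2 ≤
      supNorm (deriv γ) ^ (2 * (s - 1) + 1) / minSpeed γ ^ 2 * gagGammaSq s γ u := by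
  have hγ' := hγ.inHs.memSlobodeckij_deriv.continuous
  have hfin : gagGammaSqE s γ u ≠ ⊤ := ne_top_of_le_ne_top
    (ENNReal.mul_ne_top ENNReal.ofReal_ne_top (hγ.memSlobodeckij_Dg hu).gagliardoSqE_lt_top.ne)
    (gagGammaSqE_le_mul_gagliardoSqE hs hγ' hγ.minSpeed_pos (minSpeed_le γ)
      hγ.norm_deriv_le u)
  have hreal := ENNReal.toReal_mono (ENNReal.mul_ne_top ENNReal.ofReal_ne_top hfin)
    (gagliardoSqE_le_mul_gagGammaSqE hs hγ' hγ.minSpeed_pos (minSpeed_le γ)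
      hγ.norm_deriv_le u)
  have := hγ.supNorm_deriv_pos
  rwa [ENNReal.toReal_mul, ENNReal.toReal_ofReal (by positivity), ← sq_gagliardoSeminorm] at hreal

lemma HsGammaNormSq_le (hs : 1 / 2 < s) (hγ : IsHsImmersion s γ) (hu : InHs s u) :
    HsGammaNormSq s γ u ≤ supNorm (deriv γ) * (∫ x in I01, ‖u x‖ ^ 2) +
      (supNorm (deriv γ) + supNorm (deriv γ) ^ 2 / minSpeed γ ^ (2 * (s - 1) + 1)) *
        slobodeckijNorm (s - 1) (Dg γ u) ^ 2 := by
  have hγ' := hγ.inHs.memSlobodeckij_deriv.continuous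
  have hL2 := innerL2g_self_le hγ' hγ.norm_deriv_le hu.continuous
  have hH1 : innerH1g γ u u ≤ _ :=
    innerL2g_self_le hγ' hγ.norm_deriv_le (hγ.memSlobodeckij_Dg hu).continuous
  have hgag := hγ.gagGammaSq_le hs hu
  have := hγ.minSpeed_pos
  have := hγ.supNorm_deriv_pos
  have hcross₁ : 0 ≤ supNorm (deriv γ) * gagliardoSeminorm (s - 1) (Dg γ u) ^ 2 := by positivity
  have hcross₂ : 0 ≤ supNorm (deriv γ) ^ 2 / minSpeed γ ^ (2 * (s - 1) + 1) *
    ∫ x in I01, ‖Dg γ u x‖ ^ 2 := by positivity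
  rw [HsGammaNormSq, sq_slobodeckijNorm]
  linarith

lemma integral_norm_sq_le (hγ : IsHsImmersion s γ) {v : ℝ → En n} (hv : Continuous v) :
    ∫ x in I01, ‖v x‖ ^ 2 ≤ (minSpeed γ)⁻¹ * innerL2g γ v v := by
  rw [le_inv_mul_iff₀ hγ.minSpeed_pos]
  exact mul_integral_norm_sq_le_innerL2g_self hγ.inHs.memSlobodeckij_deriv.continuous
    (minSpeed_le γ) hv

lemma sq_slobodeckijNorm_Dg_le (hs : 1 / 2 < s) (hγ : IsHsImmersion s γ) (hu : InHs s u) :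
    slobodeckijNorm (s - 1) (Dg γ u) ^ 2 ≤
      ((minSpeed γ)⁻¹ + supNorm (deriv γ) ^ (2 * (s - 1) + 1) / minSpeed γ ^ 2) *
        (innerH1g γ u u + gagGammaSq s γ u) := by
  have hL2 : _ ≤ _ * innerH1g γ u u :=
    hγ.integral_norm_sq_le (hγ.memSlobodeckij_Dg hu).continuous
  have hgag := hγ.sq_gagliardoSeminorm_Dg_le hs hu
  have := hγ.minSpeed_pos
  have := hγ.supNorm_deriv_pos
  have hcross₁ : 0 ≤ (minSpeed γ)⁻¹ * gagGammaSq s γ u :=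
    mul_nonneg (by positivity) ENNReal.toReal_nonneg
  have hcross₂ : 0 ≤ supNorm (deriv γ) ^ (2 * (s - 1) + 1) / minSpeed γ ^ 2 * innerH1g γ u u :=
    mul_nonneg (by positivity) (innerL2g_self_nonneg γ (Dg γ u))
  rw [sq_slobodeckijNorm]
  linarith

lemma HsGammaNorm_le (hs : 3 / 2 < s) (hγ : IsHsImmersion s γ) (hu : InHs s u) :
    HsGammaNorm s γ u ≤ upperConst s γ * HsNorm s u := by
  have := hγ.minSpeed_pos
  have := hγ.supNorm_deriv_pos
  rw [HsGammaNorm, upperConst, HsNorm, ← Real.sqrt_mul (by positivity), HsNormSq_eq]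
  refine Real.sqrt_le_sqrt ((hγ.HsGammaNormSq_le (by linarith) hu).trans ?_)
  set C := supNorm (deriv γ) + supNorm (deriv γ) ^ 2 / minSpeed γ ^ (2 * (s - 1) + 1)
  set A := (minSpeed γ)⁻¹ + (minSpeed γ)⁻¹ ^ 2 *
    (sobolevConst (s - 1) * gagliardoSeminorm (s - 1) (deriv γ))
  set I := ∫ x in I01, ‖u x‖ ^ 2
  set K := slobodeckijNorm (s - 1) (deriv u)
  have : 0 ≤ I := by positivity
  have : 0 ≤ C := by positivity
  calc supNorm (deriv γ) * I + C * slobodeckijNorm (s - 1) (Dg γ u) ^ 2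
      ≤ supNorm (deriv γ) * I + C * (A * K) ^ 2 := by
        gcongr
        · exact slobodeckijNorm_nonneg _ _
        · exact hγ.slobodeckijNorm_Dg_le hs hu
    _ ≤ supNorm (deriv γ) * I + C * (A * K) ^ 2 + (supNorm (deriv γ) * K ^ 2 + C * A ^ 2 * I) :=
        le_add_of_nonneg_right (by positivity)
    _ = (supNorm (deriv γ) + C * A ^ 2) * (I + K ^ 2) := by ring

lemma lowerConst_mul_HsNorm_le (hs : 3 / 2 < s) (hγ : IsHsImmersion s γ) (hu : InHs s u) :
    lowerConst s γ * HsNorm s u ≤ HsGammaNorm s γ u := by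
  have := hγ.minSpeed_pos
  have := hγ.supNorm_deriv_pos
  rw [HsGammaNorm, lowerConst, HsNorm, inv_mul_le_iff₀ (by positivity),
    ← Real.sqrt_mul (by positivity), HsNormSq_eq, HsGammaNormSq, add_assoc]
  refine Real.sqrt_le_sqrt ?_
  set C := (minSpeed γ)⁻¹ + supNorm (deriv γ) ^ (2 * (s - 1) + 1) / minSpeed γ ^ 2
  set B := supNorm (deriv γ) + sobolevConst (s - 1) * gagliardoSeminorm (s - 1) (deriv γ)
  set H := innerH1g γ u u + gagGammaSq s γ u
  have : 0 ≤ C := by positivity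
  have hL : 0 ≤ innerL2g γ u u := innerL2g_self_nonneg γ u
  have hH : 0 ≤ H := add_nonneg (innerL2g_self_nonneg γ (Dg γ u)) ENNReal.toReal_nonneg
  calc (∫ x in I01, ‖u x‖ ^ 2) + slobodeckijNorm (s - 1) (deriv u) ^ 2
      ≤ (minSpeed γ)⁻¹ * innerL2g γ u u + (B * slobodeckijNorm (s - 1) (Dg γ u)) ^ 2 := by
        gcongr
        · exact hγ.integral_norm_sq_le hu.continuous
        · exact slobodeckijNorm_nonneg _ _
        · exact hγ.slobodeckijNorm_deriv_le hs hu
    _ ≤ (minSpeed γ)⁻¹ * innerL2g γ u u + B ^ 2 * (C * H) := by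
        rw [mul_pow]
        gcongr
        exact hγ.sq_slobodeckijNorm_Dg_le (by linarith) hu
    _ ≤ (minSpeed γ)⁻¹ * innerL2g γ u u + B ^ 2 * (C * H) +
          ((minSpeed γ)⁻¹ * H + B ^ 2 * (C * innerL2g γ u u)) :=
        le_add_of_nonneg_right (by positivity)
    _ = ((minSpeed γ)⁻¹ + C * B ^ 2) * (innerL2g γ u u + H) := by ring

lemma upperConst_pos (hγ : IsHsImmersion s γ) : 0 < upperConst s γ := by
  have := hγ.minSpeed_pos
  have := hγ.supNorm_deriv_pos
  rw [upperConst]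
  positivity

lemma lowerConst_pos (hγ : IsHsImmersion s γ) : 0 < lowerConst s γ := by
  have := hγ.minSpeed_pos
  have := hγ.supNorm_deriv_pos
  rw [lowerConst]
  positivity

end IsHsImmersion

end NormEquivalence

/-! ### Continuity of the constants -/

/-- The filter of neighbourhoods of `γ` in `H^s` for the topology of the `H^s` norm. -/
def nhdsHs {n : ℕ} (s : ℝ) (γ : ℝ → En n) : Filter (ℝ → En n) :=
  𝓟 {η | InHs s η} ⊓ comap (fun η => HsNorm s (η - γ)) (𝓝 0)

section Continuity

variable {n : ℕ} {s : ℝ} {γ η : ℝ → En n}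

lemma tendsto_HsNorm_sub_nhdsHs (s : ℝ) (γ : ℝ → En n) :
    Tendsto (fun η => HsNorm s (η - γ)) (nhdsHs s γ) (𝓝 0) :=
  tendsto_comap.mono_left inf_le_right

lemma eventually_inHs_nhdsHs (s : ℝ) (γ : ℝ → En n) : ∀ᶠ η in nhdsHs s γ, InHs s η :=
  mem_inf_of_left (mem_principal_self _)

lemma exists_forall_HsNorm_sub_lt {p : (ℝ → En n) → Prop} (hp : ∀ᶠ η in nhdsHs s γ, p η) :
    ∃ δ, 0 < δ ∧ ∀ η, InHs s η → HsNorm s (η - γ) < δ → p η := by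
  have hbasis := (hasBasis_principal {η : ℝ → En n | InHs s η}).inf
    (nhds_basis_Ioo_pos 0 |>.comap fun η : ℝ → En n => HsNorm s (η - γ))
  obtain ⟨⟨_, δ⟩, ⟨_, hδ⟩, hsub⟩ := hbasis.eventually_iff.1 hp
  refine ⟨δ, hδ, fun η hη hlt => hsub ⟨hη, ?_, ?_⟩⟩
  · exact (by linarith : (0 : ℝ) - δ < 0).trans_le (Real.sqrt_nonneg _)
  · rwa [zero_add]

lemma tendsto_nhdsHs_of_abs_sub_le {Φ : (ℝ → En n) → ℝ} {C : ℝ}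
    (h : ∀ η, InHs s η → |Φ η - Φ γ| ≤ C * HsNorm s (η - γ)) :
    Tendsto Φ (nhdsHs s γ) (𝓝 (Φ γ)) := by
  refine tendsto_iff_norm_sub_tendsto_zero.2 (squeeze_zero' (Eventually.of_forall fun _ =>
    norm_nonneg _) ((eventually_inHs_nhdsHs s γ).mono h) ?_)
  simpa only [mul_zero] using (tendsto_HsNorm_sub_nhdsHs s γ).const_mul C

namespace InHs

lemma deriv_sub (hη : InHs s η) (hγ : InHs s γ) : deriv (η - γ) = deriv η - deriv γ :=
  funext fun x => _root_.deriv_sub (hη.2.1.differentiable one_ne_zero x)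
    (hγ.2.1.differentiable one_ne_zero x)

lemma slobodeckijNorm_deriv_sub_le (hη : InHs s η) (hγ : InHs s γ) :
    slobodeckijNorm (s - 1) (deriv η - deriv γ) ≤ HsNorm s (η - γ) := by
  rw [HsNorm, HsNormSq_eq, hη.deriv_sub hγ]
  exact Real.le_sqrt_of_sq_le (le_add_of_nonneg_left (by positivity))

lemma gagliardoSeminorm_deriv_sub_le (hη : InHs s η) (hγ : InHs s γ) :
    gagliardoSeminorm (s - 1) (deriv η - deriv γ) ≤ HsNorm s (η - γ) :=
  (gagliardoSeminorm_le_slobodeckijNorm _ _).trans (hη.slobodeckijNorm_deriv_sub_le hγ)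

lemma supNorm_deriv_sub_le (hs : 3 / 2 < s) (hη : InHs s η) (hγ : InHs s γ) :
    supNorm (deriv η - deriv γ) ≤ sobolevConst (s - 1) * HsNorm s (η - γ) := by
  have hs' : 1 / 2 < s - 1 := by linarith
  have := (sobolevConst_pos hs').le
  exact ((hη.memSlobodeckij_deriv.sub hγ.memSlobodeckij_deriv).supNorm_le hs').trans
    (by gcongr; exact hη.slobodeckijNorm_deriv_sub_le hγ)

lemma minSpeed_sub_le (hη : InHs s η) (hγ : InHs s γ) :
    minSpeed η - minSpeed γ ≤ supNorm (deriv η - deriv γ) := by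
  rw [sub_le_comm]
  refine le_ciInf fun x => ?_
  have hsup := (hη.memSlobodeckij_deriv.sub hγ.memSlobodeckij_deriv).norm_le_supNorm x
  rw [Pi.sub_apply] at hsup
  linarith [minSpeed_le η x, norm_sub_norm_le (deriv η x) (deriv γ x)]

lemma abs_minSpeed_sub_le (hη : InHs s η) (hγ : InHs s γ) :
    |minSpeed η - minSpeed γ| ≤ supNorm (deriv η - deriv γ) := by
  refine abs_sub_le_iff.2 ⟨hη.minSpeed_sub_le hγ, ?_⟩
  simpa only [supNorm, Pi.sub_apply, norm_sub_rev] using hγ.minSpeed_sub_le hη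

end InHs

lemma tendsto_minSpeed (hs : 3 / 2 < s) (hγ : InHs s γ) :
    Tendsto minSpeed (nhdsHs s γ) (𝓝 (minSpeed γ)) :=
  tendsto_nhdsHs_of_abs_sub_le fun _ hη =>
    (hη.abs_minSpeed_sub_le hγ).trans (hη.supNorm_deriv_sub_le hs hγ)

lemma tendsto_supNorm_deriv (hs : 3 / 2 < s) (hγ : InHs s γ) :
    Tendsto (fun η => supNorm (deriv η)) (nhdsHs s γ) (𝓝 (supNorm (deriv γ))) :=
  tendsto_nhdsHs_of_abs_sub_le fun _ hη =>
    (hη.memSlobodeckij_deriv.abs_supNorm_sub_supNorm_le hγ.memSlobodeckij_deriv).trans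
      (hη.supNorm_deriv_sub_le hs hγ)

lemma tendsto_gagliardoSeminorm_deriv (hγ : InHs s γ) :
    Tendsto (fun η => gagliardoSeminorm (s - 1) (deriv η)) (nhdsHs s γ)
      (𝓝 (gagliardoSeminorm (s - 1) (deriv γ))) :=
  tendsto_nhdsHs_of_abs_sub_le (C := 1) fun _ hη => by
    rw [one_mul]
    exact (hη.memSlobodeckij_deriv.abs_gagliardoSeminorm_sub_le hγ.memSlobodeckij_deriv).trans
      (hη.gagliardoSeminorm_deriv_sub_le hγ)

namespace IsHsImmersion

lemma tendsto_inv_minSpeed (hs : 3 / 2 < s) (hγ : IsHsImmersion s γ) :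
    Tendsto (fun η => (minSpeed η)⁻¹) (nhdsHs s γ) (𝓝 (minSpeed γ)⁻¹) :=
  (tendsto_minSpeed hs hγ.inHs).inv₀ hγ.minSpeed_pos.ne'

lemma tendsto_upperConst (hs : 3 / 2 < s) (hγ : IsHsImmersion s γ) :
    Tendsto (upperConst s) (nhdsHs s γ) (𝓝 (upperConst s γ)) := by
  have hm := tendsto_minSpeed hs hγ.inHs
  have hm_inv := hγ.tendsto_inv_minSpeed hs
  have hM := tendsto_supNorm_deriv hs hγ.inHs
  have hG := (tendsto_gagliardoSeminorm_deriv hγ.inHs).const_mul (sobolevConst (s - 1))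
  have hm_rpow := hm.rpow_const (p := 2 * (s - 1) + 1) (Or.inl hγ.minSpeed_pos.ne')
  have hm_rpow_ne : minSpeed γ ^ (2 * (s - 1) + 1) ≠ 0 :=
    (Real.rpow_pos_of_pos hγ.minSpeed_pos _).ne'
  exact (hM.add ((hM.add ((hM.pow 2).div hm_rpow hm_rpow_ne)).mul
    ((hm_inv.add ((hm_inv.pow 2).mul hG)).pow 2))).sqrt

lemma tendsto_lowerConst (hs : 3 / 2 < s) (hγ : IsHsImmersion s γ) :
    Tendsto (lowerConst s) (nhdsHs s γ) (𝓝 (lowerConst s γ)) := by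
  have hm := tendsto_minSpeed hs hγ.inHs
  have hm_inv := hγ.tendsto_inv_minSpeed hs
  have hM := tendsto_supNorm_deriv hs hγ.inHs
  have hG := (tendsto_gagliardoSeminorm_deriv hγ.inHs).const_mul (sobolevConst (s - 1))
  have hM_rpow := hM.rpow_const (p := 2 * (s - 1) + 1) (Or.inl hγ.supNorm_deriv_pos.ne')
  have hm_sq_ne : minSpeed γ ^ 2 ≠ 0 := pow_ne_zero 2 hγ.minSpeed_pos.ne'
  exact (hm_inv.add ((hm_inv.add (hM_rpow.div (hm.pow 2) hm_sq_ne)).mul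
    ((hM.add hG).pow 2))).sqrt.inv₀ (inv_pos.1 hγ.lowerConst_pos).ne'

end IsHsImmersion

end Continuity

theorem statement4_general {s : ℝ} (hs : 3 / 2 < s) (n : ℕ) :
    ∃ f F : (ℝ → En n) → ℝ,
      (∀ γ, IsHsImmersion s γ → 0 < f γ) ∧ (∀ γ, IsHsImmersion s γ → 0 < F γ) ∧
      (∀ γ, IsHsImmersion s γ → ∀ ε : ℝ, 0 < ε → ∃ δ : ℝ, 0 < δ ∧ ∀ η, IsHsImmersion s η →
        HsNorm s (fun x => η x - γ x) < δ → |f η - f γ| < ε ∧ |F η - F γ| < ε) ∧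
      (∀ γ, IsHsImmersion s γ → ∀ u : ℝ → En n, InHs s u →
        f γ * HsNorm s u ≤ HsGammaNorm s γ u ∧ HsGammaNorm s γ u ≤ F γ * HsNorm s u) := by
  refine ⟨lowerConst s, upperConst s, fun γ hγ => hγ.lowerConst_pos, fun γ hγ => hγ.upperConst_pos,
    fun γ hγ ε hε => ?_,
    fun γ hγ u hu => ⟨hγ.lowerConst_mul_HsNorm_le hs hu, hγ.HsGammaNorm_le hs hu⟩⟩
  have hclose : ∀ᶠ η in nhdsHs s γ,
      |lowerConst s η - lowerConst s γ| < ε ∧ |upperConst s η - upperConst s γ| < ε :=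
    ((hγ.tendsto_lowerConst hs).eventually (Metric.ball_mem_nhds _ hε)).and
      ((hγ.tendsto_upperConst hs).eventually (Metric.ball_mem_nhds _ hε))
  obtain ⟨δ, hδ, hball⟩ := exists_forall_HsNorm_sub_lt hclose
  exact ⟨δ, hδ, fun η hη => hball η hη.inHs⟩

/-- norm equivalence: there are continuous functions
`f, F : 𝓜 → (0,∞)` (continuity with respect to the `H^s` topology on `𝓜`) such that
`f(γ)·‖u‖_{H^s} ≤ ‖u‖_{H^s(γ)} ≤ F(γ)·‖u‖_{H^s}` for every `γ ∈ 𝓜` and `u ∈ H^s(𝕋,ℝⁿ)`;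
in particular, for each `γ ∈ 𝓜` the norms `‖·‖_{H^s(γ)}` and `‖·‖_{H^s}` are equivalent. -/
theorem statement4 (s : ℝ) (hs : s ∈ Set.Ioo (3 / 2 : ℝ) 2) (n : ℕ) (hn : 2 ≤ n) :
    ∃ f F : (ℝ → En n) → ℝ,
      (∀ γ, InM s γ → 0 < f γ) ∧ (∀ γ, InM s γ → 0 < F γ) ∧
      (∀ γ, InM s γ → ∀ ε : ℝ, 0 < ε → ∃ δ : ℝ, 0 < δ ∧ ∀ η, InM s η →
        HsNorm s (fun x => η x - γ x) < δ → |f η - f γ| < ε ∧ |F η - F γ| < ε) ∧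
      (∀ γ, InM s γ → ∀ u : ℝ → En n, InHs s u →
        f γ * HsNorm s u ≤ HsGammaNorm s γ u ∧ HsGammaNorm s γ u ≤ F γ * HsNorm s u) := by
  obtain ⟨f, F, hf, hF, hcont, hle⟩ := statement4_general hs.1 n
  exact ⟨f, F, fun γ hγ => hf γ hγ.isHsImmersion, fun γ hγ => hF γ hγ.isHsImmersion,
    fun γ hγ ε hε => (hcont γ hγ.isHsImmersion ε hε).imp fun _ h =>
      ⟨h.1, fun η hη => h.2 η hη.isHsImmersion⟩,
    fun γ hγ => hle γ hγ.isHsImmersion⟩
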